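/- Fix integers m, n ≥ 1, an even integer δ ≥ 2, and D ∈ (0, 1/2] with D·n a natural number. Let z ∈ (ZMod 2)^m have Hamming weight t and set w := t/m, and assume u(D;δ) ≤ w ≤ 1 − u(D;δ). Let x(z) be the random codeword of z in the degree-δ LDGM ensemble with m inputs and blocklength n, and let S be uniformly distributed on (ZMod 2)^n, independent of the ensemble. Then P(hammingDist(x(z), S) ≤ D·n ∣ wt(S) ≤ D·n) ≤ 2^{−n·D₂(D‖β(w;δ))}. -/

import Mathlib

/-!
The bits of the random codeword of `z` are independent, and a single bit is `1` with probability
`β = β(w;δ)`. Since `δ` is even, `β ≤ 1/2`, and the condition `u ≤ w ≤ 1 - u` says `D ≤ β`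
(`ldgmBeta_mem`).

Fix a source word `s` and `0 < lam ≤ 1`. The exponential moment of `hammingDist (x(z)) s` factors
over the coordinates (`sum_pow_hammingDist`). Writing the indicator of a bit through the sign
character of `ZMod 2`, each factor is, after
division by the number `m^δ` of index tuples,
`(1 + lam)/2 ± (1 - lam)/2 * (1-2w)^δ`, with sign `+` exactly where `s` vanishes; evenness of `δ`
makes `+` the larger one, so every factor is at most `1 - β + β * lam` (`sum_row_le`). The
Chernoff bound with `lam = D(1-β) / ((1-D)β)`, which is at most `1` because `D ≤ β`, then gives
`2^(-n D₂(D‖β))` for every fixed `s` (`card_close_le`), and averaging over the `s` of weight at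
most `D n` keeps the bound. Thus the conditioning event only enters through independence.
-/

open Finset
open scoped BigOperators Classical

noncomputable section

/-- `ldgmBeta w δ = (1 - (1-2w)^δ)/2`: the Bernoulli parameter induced by an
input of relative weight `w` in the degree-`δ` LDGM ensemble. -/
def ldgmBeta (w : ℝ) (δ : ℕ) : ℝ := (1 - (1 - 2 * w) ^ δ) / 2

/-- `ldgmU D δ = (1 - (1-2D)^(1/δ))/2`. -/
def ldgmU (D : ℝ) (δ : ℕ) : ℝ := (1 - (1 - 2 * D) ^ ((1 : ℝ) / δ)) / 2

/-- Binary entropy function (in bits). -/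
def binEnt (x : ℝ) : ℝ := -(x * Real.logb 2 x) - (1 - x) * Real.logb 2 (1 - x)

/-- Binary Kullback–Leibler divergence (in bits). -/
def klBin (a p : ℝ) : ℝ := a * Real.logb 2 (a / p) + (1 - a) * Real.logb 2 ((1 - a) / (1 - p))

/-- Probability of the event `E` under the uniform distribution on the finite type `Ω`. -/
def unifP (Ω : Type*) [Fintype Ω] (E : Ω → Prop) : ℝ :=
  ((Finset.univ.filter E).card : ℝ) / (Fintype.card Ω : ℝ)

/-- Conditional probability of `E` given `F` under the uniform distribution on `Ω`. -/
def unifCondP (Ω : Type*) [Fintype Ω] (E F : Ω → Prop) : ℝ :=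
  unifP Ω (fun ω => E ω ∧ F ω) / unifP Ω F

/-- Expectation of `f` under the uniform distribution on the finite type `Ω`. -/
def unifE (Ω : Type*) [Fintype Ω] (f : Ω → ℝ) : ℝ :=
  (∑ ω : Ω, f ω) / (Fintype.card Ω : ℝ)

/-- The encoding map of the degree-`δ` LDGM ensemble with `m` inputs and blocklength `n`:
given the random index choices `I`, the `j`-th codeword bit of `z` is
`z (I j 1) + ⋯ + z (I j δ)` (mod 2). -/
def ldgmEnc {m n δ : ℕ} (I : Fin n → Fin δ → Fin m) (z : Fin m → ZMod 2) :
    Fin n → ZMod 2 := fun j => ∑ i : Fin δ, z (I j i)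

/-- The nontrivial character `ZMod 2 → {1, -1}`, with real values. -/
def sgn (a : ZMod 2) : ℝ := if a = 0 then 1 else -1

lemma sgn_add (a b : ZMod 2) : sgn (a + b) = sgn a * sgn b := by
  have h : ∀ a : ZMod 2, a = 0 ∨ a = 1 := by decide
  have h1 : (1 : ZMod 2) ≠ 0 := by decide
  have h2 : (1 : ZMod 2) + 1 = 0 := by decide
  rcases h a with rfl | rfl <;> rcases h b with rfl | rfl <;> simp [sgn, h2]

lemma sgn_sum {ι : Type*} (s : Finset ι) (f : ι → ZMod 2) :
    sgn (∑ i ∈ s, f i) = ∏ i ∈ s, sgn (f i) := by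
  classical
  induction s using Finset.induction_on with
  | empty => simp [sgn]
  | insert a s ha ih => rw [Finset.sum_insert ha, Finset.prod_insert ha, sgn_add, ih]

lemma sgn_le_one (a : ZMod 2) : sgn a ≤ 1 := by
  unfold sgn; split_ifs <;> norm_num

/-- Expansion of `lam ^ [a ≠ b]` in the characters of `ZMod 2`. -/
lemma ite_eq_sgn (lam : ℝ) (a b : ZMod 2) :
    (if a ≠ b then lam else 1) = (1 + lam) / 2 + sgn b * ((1 - lam) / 2) * sgn a := by
  have h : ∀ a : ZMod 2, a = 0 ∨ a = 1 := by decide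
  have h1 : (1 : ZMod 2) ≠ 0 := by decide
  rcases h a with rfl | rfl <;> rcases h b with rfl | rfl <;> (simp [sgn]; try ring)

lemma sum_sgn {m : ℕ} (z : Fin m → ZMod 2) :
    ∑ i, sgn (z i) = (m : ℝ) - 2 * (hammingNorm z : ℝ) := by
  have h : ∀ i, sgn (z i) = 1 - 2 * (if z i ≠ 0 then (1 : ℝ) else 0) := by
    intro i; unfold sgn; split_ifs <;> first | (norm_num; done) | simp_all
  simp only [h, Finset.sum_sub_distrib, ← Finset.mul_sum, Finset.sum_boole]
  simp [hammingNorm]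

lemma sum_sgn_row {m δ : ℕ} (z : Fin m → ZMod 2) :
    ∑ r : Fin δ → Fin m, sgn (∑ i, z (r i)) = ((m : ℝ) - 2 * (hammingNorm z : ℝ)) ^ δ := by
  simp only [sgn_sum]
  have h := Finset.prod_univ_sum (fun _ : Fin δ => (Finset.univ : Finset (Fin m)))
    (fun _ v => sgn (z v))
  rw [Fintype.piFinset_univ] at h
  rw [← h, Finset.prod_const, sum_sgn]
  simp

/-- Exponential moment of a single coordinate: as `δ` is even, it is largest where the source bit
`b` is zero. -/
lemma sum_row_le {m δ : ℕ} (hm : 1 ≤ m) (hδ : Even δ) (z : Fin m → ZMod 2) (b : ZMod 2)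
    {lam : ℝ} (hlam : lam ≤ 1) :
    ∑ r : Fin δ → Fin m, (if ∑ i, z (r i) ≠ b then lam else 1) ≤
      (m : ℝ) ^ δ * (1 - ldgmBeta ((hammingNorm z : ℝ) / m) δ
        + ldgmBeta ((hammingNorm z : ℝ) / m) δ * lam) := by
  have hm0 : (m : ℝ) ≠ 0 := by positivity
  have hpow : ((m : ℝ) - 2 * (hammingNorm z : ℝ)) ^ δ
      = (m : ℝ) ^ δ * (1 - 2 * ((hammingNorm z : ℝ) / m)) ^ δ := by
    rw [← mul_pow]; congr 1; field_simp
  have hpos : 0 ≤ (1 - 2 * ((hammingNorm z : ℝ) / m)) ^ δ := hδ.pow_nonneg _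
  simp only [ite_eq_sgn, Finset.sum_add_distrib, ← Finset.mul_sum, sum_sgn_row, hpow]
  simp only [Finset.sum_const, Finset.card_univ, Fintype.card_pi, Fintype.card_fin,
    Finset.prod_const, nsmul_eq_mul, Nat.cast_pow, ldgmBeta]
  generalize (1 - 2 * ((hammingNorm z : ℝ) / m)) ^ δ = q at *
  have h1 : sgn b * ((1 - lam) / 2 * q * (m : ℝ) ^ δ) ≤ 1 * ((1 - lam) / 2 * q * (m : ℝ) ^ δ) := by
    apply mul_le_mul_of_nonneg_right (sgn_le_one b)
    have : 0 ≤ (1 - lam) / 2 := by linarith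
    positivity
  linarith

lemma sum_pow_hammingDist {m n δ : ℕ} (z : Fin m → ZMod 2) (s : Fin n → ZMod 2) (lam : ℝ) :
    ∑ I : Fin n → Fin δ → Fin m, lam ^ hammingDist (ldgmEnc I z) s =
      ∏ j, ∑ r : Fin δ → Fin m, (if ∑ i, z (r i) ≠ s j then lam else 1) := by
  have h := Finset.prod_univ_sum (fun _ : Fin n => (Finset.univ : Finset (Fin δ → Fin m)))
    (fun j r => if ∑ i, z (r i) ≠ s j then lam else 1)
  rw [Fintype.piFinset_univ] at h
  rw [h]
  refine Finset.sum_congr rfl fun I _ => ?_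
  rw [Finset.prod_ite, Finset.prod_const_one, mul_one, Finset.prod_const]
  rfl

/-- The hypothesis on `w` places `β(w;δ)` in `[D, 1/2]`. -/
lemma ldgmBeta_mem {δ : ℕ} (hδe : Even δ) (hδ : 2 ≤ δ) {D w : ℝ} (hD : D ≤ 1 / 2)
    (h1 : ldgmU D δ ≤ w) (h2 : w ≤ 1 - ldgmU D δ) :
    D ≤ ldgmBeta w δ ∧ ldgmBeta w δ ≤ 1 / 2 := by
  have hpos : 0 ≤ (1 - 2 * w) ^ δ := hδe.pow_nonneg _
  have hle : (1 - 2 * w) ^ δ ≤ 1 - 2 * D := by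
    have habs : |1 - 2 * w| ≤ (1 - 2 * D) ^ ((1 : ℝ) / δ) := by
      unfold ldgmU at h1 h2
      rw [abs_le]; constructor <;> linarith
    calc (1 - 2 * w) ^ δ = |1 - 2 * w| ^ δ := (hδe.pow_abs _).symm
      _ ≤ ((1 - 2 * D) ^ ((1 : ℝ) / δ)) ^ δ := pow_le_pow_left₀ (abs_nonneg _) habs _
      _ = 1 - 2 * D := by
        rw [one_div]
        exact Real.rpow_inv_natCast_pow (by linarith) (by omega)
  unfold ldgmBeta
  constructor <;> linarith

/-- The closed form `2^(-n D₂(D‖p)) = ((1-D)/(1-p))^k (D/p)^(-k) ((1-D)/(1-p))^(-n)` for `k = D n`,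
with denominators cleared. -/
lemma two_rpow_klBin {n k : ℕ} {D p : ℝ} (hD0 : 0 < D) (hD1 : D < 1) (hp0 : 0 < p) (hp1 : p < 1)
    (hk : (k : ℝ) = D * n) :
    (2 : ℝ) ^ (-(n : ℝ) * klBin D p) * (D / p) ^ k * ((1 - D) / (1 - p)) ^ n
      = ((1 - D) / (1 - p)) ^ k := by
  have a1 : 0 < D / p := by positivity
  have a2 : 0 < (1 - D) / (1 - p) := div_pos (by linarith) (by linarith)
  have key : ∀ x : ℝ, 0 < x → ∀ l : ℕ, x ^ l = (2 : ℝ) ^ ((l : ℝ) * Real.logb 2 x) := by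
    intro x hx l
    rw [mul_comm, Real.rpow_mul (by norm_num), Real.rpow_logb (by norm_num) (by norm_num) hx,
      Real.rpow_natCast]
  rw [key _ a1, key _ a2 n, key _ a2 k, ← Real.rpow_add (by norm_num),
    ← Real.rpow_add (by norm_num), hk]
  congr 1
  unfold klBin
  ring

/-- Chernoff bound for a fixed source word `s`. -/
lemma card_close_le {m n δ k : ℕ} (hm : 1 ≤ m) (hδe : Even δ) {D : ℝ}
    (hD0 : 0 < D) (hD2 : D ≤ 1 / 2) (hk : (k : ℝ) = D * n) (z : Fin m → ZMod 2)
    (hβ : D ≤ ldgmBeta ((hammingNorm z : ℝ) / m) δ)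
    (hβ2 : ldgmBeta ((hammingNorm z : ℝ) / m) δ ≤ 1 / 2) (s : Fin n → ZMod 2) :
    ∑ I : Fin n → Fin δ → Fin m,
        (if (hammingDist (ldgmEnc I z) s : ℝ) ≤ D * n then (1 : ℝ) else 0) ≤
      (2 : ℝ) ^ (-(n : ℝ) * klBin D (ldgmBeta ((hammingNorm z : ℝ) / m) δ)) *
        (Fintype.card (Fin n → Fin δ → Fin m) : ℝ) := by
  have hrow := fun (b : ZMod 2) (lam : ℝ) (hl : lam ≤ 1) => sum_row_le hm hδe z b hl
  generalize ldgmBeta ((hammingNorm z : ℝ) / m) δ = p at *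
  have hp0 : 0 < p := by linarith
  have hq0 : 0 < 1 - p := by linarith
  have hE0 : 0 < 1 - D := by linarith
  -- The minimizer of `lam ^ (-k) * (1 - p + p * lam) ^ n`.
  obtain ⟨lam, hlam⟩ : ∃ lam, lam = (D / p) / ((1 - D) / (1 - p)) := ⟨_, rfl⟩
  have hl0 : 0 < lam := by rw [hlam]; positivity
  have hl1 : lam ≤ 1 := by
    rw [hlam, div_le_one (by positivity), div_le_div_iff₀ hp0 hq0]
    nlinarith
  have hfac : 1 - p + p * lam = ((1 - D) / (1 - p))⁻¹ := by
    rw [hlam]; field_simp; ring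
  have hsum : lam ^ k * ∑ I : Fin n → Fin δ → Fin m,
        (if (hammingDist (ldgmEnc I z) s : ℝ) ≤ D * n then (1 : ℝ) else 0) ≤
      ∏ j, ∑ r : Fin δ → Fin m, (if ∑ i, z (r i) ≠ s j then lam else 1) := by
    rw [← sum_pow_hammingDist, Finset.mul_sum]
    refine Finset.sum_le_sum fun I _ => ?_
    split_ifs with h
    · rw [← hk] at h
      rw [mul_one]
      exact pow_le_pow_of_le_one hl0.le hl1 (by exact_mod_cast h)
    · rw [mul_zero]; positivity
  have hprod : ∏ j, ∑ r : Fin δ → Fin m, (if ∑ i, z (r i) ≠ s j then lam else 1) ≤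
      ((m : ℝ) ^ δ * ((1 - D) / (1 - p))⁻¹) ^ n := by
    rw [← hfac]
    calc _ ≤ ∏ _j : Fin n, ((m : ℝ) ^ δ * (1 - p + p * lam)) :=
          Finset.prod_le_prod
            (fun j _ => Finset.sum_nonneg fun r _ => by split_ifs <;> linarith)
            (fun j _ => hrow (s j) lam hl1)
      _ = _ := by simp
  have hcard : (Fintype.card (Fin n → Fin δ → Fin m) : ℝ) = ((m : ℝ) ^ δ) ^ n := by
    simp
  have hkl := two_rpow_klBin (n := n) (k := k) hD0 (by linarith) hp0 (by linarith) hk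
  have hc : 0 < (1 - D) / (1 - p) := by positivity
  have ha : 0 < D / p := by positivity
  refine le_of_mul_le_mul_left ((hsum.trans hprod).trans_eq ?_) (pow_pos hl0 k)
  rw [hcard, hlam, mul_pow, inv_pow, div_pow (D / p)]
  generalize (1 - D) / (1 - p) = c at *
  generalize D / p = a at *
  generalize (2 : ℝ) ^ (-(n : ℝ) * klBin D p) = B at *
  field_simp
  linear_combination -hkl

/-- for a vector `z` of weight `t` with `w = t/m` satisfying
`ldgmU D δ ≤ w ≤ 1 - ldgmU D δ`, the random LDGM codeword `x(z)` (index choices uniform)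
and an independent uniform source `S` satisfy
`P(hammingDist(x(z),S) ≤ D·n ∣ wt(S) ≤ D·n) ≤ 2^{-n·D₂(D‖β(w;δ))}`.
The sample space is the product of the index choices and the source, with the uniform
distribution (so the two are independent). -/
theorem conditional_codeword_probability_bound (m n δ : ℕ) (hm : 1 ≤ m) (hn : 1 ≤ n)
    (hδeven : Even δ) (hδ : 2 ≤ δ)
    (D : ℝ) (hD : D ∈ Set.Ioc (0 : ℝ) (1 / 2)) (hDn : ∃ k : ℕ, (k : ℝ) = D * n)
    (z : Fin m → ZMod 2) (t : ℕ) (hz : hammingNorm z = t)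
    (hw1 : ldgmU D δ ≤ (t : ℝ) / m) (hw2 : (t : ℝ) / m ≤ 1 - ldgmU D δ) :
    unifCondP ((Fin n → Fin δ → Fin m) × (Fin n → ZMod 2))
        (fun ω => (hammingDist (ldgmEnc ω.1 z) ω.2 : ℝ) ≤ D * n)
        (fun ω => (hammingNorm ω.2 : ℝ) ≤ D * n) ≤
      (2 : ℝ) ^ (-(n : ℝ) * klBin D (ldgmBeta ((t : ℝ) / m) δ)) := by
  obtain ⟨hD0, hD2⟩ := hD
  obtain ⟨k, hk⟩ := hDn
  subst hz
  obtain ⟨hβ, hβ2⟩ := ldgmBeta_mem hδeven hδ hD2 hw1 hw2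
  have hmain := card_close_le hm hδeven hD0 hD2 hk z hβ hβ2
  have hB : (0 : ℝ) ≤ (2 : ℝ) ^ (-(n : ℝ) * klBin D (ldgmBeta ((hammingNorm z : ℝ) / m) δ)) := by
    positivity
  generalize (2 : ℝ) ^ (-(n : ℝ) * klBin D (ldgmBeta ((hammingNorm z : ℝ) / m) δ)) = B at *
  unfold unifCondP unifP
  refine div_le_of_le_mul₀ (by positivity) hB ?_
  rw [← mul_div_assoc]
  refine div_le_div_of_nonneg_right ?_ (by positivity)
  rw [← Finset.sum_boole, ← Finset.sum_boole, Fintype.sum_prod_type_right,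
    Fintype.sum_prod_type_right, Finset.mul_sum]
  refine Finset.sum_le_sum fun s _ => ?_
  by_cases hs : (hammingNorm s : ℝ) ≤ D * n
  · simpa only [hs, and_true, if_true, Finset.sum_const, Finset.card_univ, nsmul_eq_mul,
      mul_one] using hmain s
  · simp [hs]
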